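/- (Lemma 2) Let 2 ≤ k < l, write l = kd + r with d ≥ 1 and 1 ≤ r ≤ k, and define the algorithm Ψ = φ_k^{l−k} ∘ φ_l^{dr + k d(d−1)/2} ∘ φ_k^{k−r} acting on l-configurations. Then for every 0 ≤ i ≤ k−1, Ψ(X_i) = X_{f(i)}, where f(i) = max(k − l + d·i, 0) if 0 ≤ i ≤ k−r−1, and f(i) = max(k − (d+1)(k−i), 0) if k−r ≤ i ≤ k−1. -/

import Mathlib

/-!
The moves commute with the projection `π_l` from infinite configurations onto the `l` rightmost
balls (`moveFin_proj`), so `φ_k` can be iterated on infinite configurations, where nothing has to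
be deleted. There, `φ_k` just fills bins of size `k` from left to right
(`move_iter_blockConf`), and `X_i` is the projection of a configuration with `l - i` balls arranged
in bins of size `k`, preceded by a bin with at least `i` balls (`distConf_eq_proj`).

Hence `φ_k^{k-r}` maps `X_i` to the projection of `[…, k, k, k - i]`. The move `φ_l` carries one
ball from the leftmost nonempty bin to the next one, so its iterates merge the bins from the left
(`moveFin_collapse`), and counting moves (`count_collapse`) shows that
`φ_l^{dr + kd(d-1)/2}` stops at `[j, l - j]` with `j = d i + (r + i - k)₊`. Finally,
`φ_k^{l-k}` again fills bins of size `k` while removing `l - k` balls from the left, which yields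
`X_{(j - (l - k))₊}`, and `(j - (l - k))₊ = f(i)`.
-/


open Finset

/-! Bins are indexed by `t : ℕ`, where index `t` stands for the bin labeled `-t`
in the paper (so `t = 0` is the rightmost bin).  A configuration is a function
`X : ℕ → ℕ`, `X t` being the number of balls in bin `t`. -/

/-- `binSum X t` is the number of balls in bins `0, …, t-1`, i.e. strictly to the
right of bin `t`.  In the paper's notation this is `Σ_{j = -t+1}^{0} X(j)`. -/
def binSum (X : ℕ → ℕ) (t : ℕ) : ℕ := ∑ m ∈ Finset.range t, X m

/-- An infinite configuration: every bin contains a positive number of balls. -/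
def IsInfConf (X : ℕ → ℕ) : Prop := ∀ t, 0 < X t

/-- An `n`-configuration: for some `p ≥ 1`, bins `0, …, p-1` are nonempty, all the
other bins are empty, and the total number of balls is `n`. -/
def IsNConf (n : ℕ) (X : ℕ → ℕ) : Prop :=
  ∃ p : ℕ, 1 ≤ p ∧ (∀ t, t < p → 0 < X t) ∧ (∀ t, p ≤ t → X t = 0) ∧ binSum X p = n

/-- The `n`-ball projection `π_n`: keep the `n` rightmost balls, erase the others.
(Truncated subtraction makes the value `0` as soon as `binSum X t ≥ n`.) -/
def proj (n : ℕ) (X : ℕ → ℕ) : ℕ → ℕ := fun t => min (X t) (n - binSum X t)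

/-- The move `φ_k` on infinite configurations: if the rightmost bin contains at
least `k` balls, create a new rightmost bin containing one ball (shifting
everything); otherwise add one ball to the bin immediately to the right of the
bin containing the `k`-th ball counted from the right. -/
noncomputable def move (k : ℕ) (X : ℕ → ℕ) : ℕ → ℕ :=
  if k ≤ X 0 then fun t => if t = 0 then 1 else X (t - 1)
  else fun t => if t = sInf {b : ℕ | k ≤ binSum X (b + 1)} - 1 then X t + 1 else X t

/-- Delete one ball from the leftmost nonempty bin. -/
noncomputable def removeLeft (X : ℕ → ℕ) : ℕ → ℕ :=
  fun t => if t = sSup {b : ℕ | 0 < X b} then X t - 1 else X t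

/-- The move `φ_k` on `n`-configurations: add a ball to the bin immediately to the
right of the bin containing the `k`-th ball from the right (creating a new
rightmost bin if needed), then delete one ball from the leftmost nonempty bin. -/
noncomputable def moveFin (k : ℕ) (X : ℕ → ℕ) : ℕ → ℕ := removeLeft (move k X)

/-- Apply an algorithm, i.e. a finite composition of moves, to an infinite
configuration.  `applyAlg [k₁, …, kₘ] X = φ_{k₁}(φ_{k₂}(⋯ φ_{kₘ}(X)))`. -/
noncomputable def applyAlg (w : List ℕ) (X : ℕ → ℕ) : ℕ → ℕ := w.foldr move X

/-- Apply an algorithm to a finite configuration. -/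
noncomputable def applyAlgFin (w : List ℕ) (X : ℕ → ℕ) : ℕ → ℕ := w.foldr moveFin X

/-- The configuration denoted `[a₁, …, a_p]` in the paper: the list is read from
the leftmost nonempty bin to the rightmost bin. -/
def ofList (L : List ℕ) : ℕ → ℕ := fun t => L.reverse.getD t 0

/-- The distinguished `l`-configurations `X_i` (for `l = k*d + r`, `1 ≤ r ≤ k`):
`X_0 = [k, …, k, r]` (`d` bins of `k` balls), `X_i = [i, k, …, k, r-i]` (`d` bins
of `k` balls) for `1 ≤ i ≤ r-1`, and `X_i = [i, k, …, k, k+r-i]` (`d-1` bins of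
`k` balls) for `r ≤ i ≤ k-1`. -/
def distConf (k d r i : ℕ) : ℕ → ℕ :=
  if i = 0 then ofList (List.replicate d k ++ [r])
  else if i < r then ofList (i :: (List.replicate d k ++ [r - i]))
  else ofList (i :: (List.replicate (d - 1) k ++ [k + r - i]))

/-- The `l`-configurations `Y_j`: `Y_0 = [l]` and `Y_j = [j, l-j]` for `1 ≤ j ≤ l-1`. -/
def yConf (l j : ℕ) : ℕ → ℕ := if j = 0 then ofList [l] else ofList [j, l - j]

/-- The map `f` from the paper: `f(i) = (k - l + d·i)₊` for `0 ≤ i ≤ k-r-1` and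
`f(i) = (k - (d+1)(k-i))₊` for `k-r ≤ i ≤ k-1` (truncated ℕ-subtraction realizes
the positive part). -/
def fMap (k l d r : ℕ) (i : ℕ) : ℕ :=
  if i < k - r then k + d * i - l else k - (d + 1) * (k - i)

/-- The algorithm `Ψ = φ_k^{l-k} ∘ φ_l^{dr + k·d(d-1)/2} ∘ φ_k^{k-r}` acting on
`l`-configurations. -/
noncomputable def Psi (k l d r : ℕ) (X : ℕ → ℕ) : ℕ → ℕ :=
  (moveFin k)^[l - k] ((moveFin l)^[d * r + k * (d * (d - 1)) / 2] ((moveFin k)^[k - r] X))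

/-! ### Bin sums, projections and single moves -/

lemma sInf_bin_eq {X : ℕ → ℕ} {k b : ℕ} (h1 : binSum X b < k) (h2 : k ≤ binSum X (b + 1)) :
    sInf {b : ℕ | k ≤ binSum X (b + 1)} = b := by
  apply le_antisymm
  · exact Nat.sInf_le h2
  · apply le_csInf ⟨b, h2⟩
    intro c hc
    by_contra hlt
    have : binSum X (c + 1) ≤ binSum X b :=
      Finset.sum_le_sum_of_subset (Finset.range_subset_range.2 (by omega))
    have hc' : k ≤ binSum X (c + 1) := hc
    omega

lemma binSum_succ (X : ℕ → ℕ) (t : ℕ) : binSum X (t + 1) = binSum X t + X t :=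
  Finset.sum_range_succ _ _

lemma binSum_zero (X : ℕ → ℕ) : binSum X 0 = 0 := rfl

lemma binSum_mono (X : ℕ → ℕ) {s t : ℕ} (h : s ≤ t) : binSum X s ≤ binSum X t :=
  Finset.sum_le_sum_of_subset (Finset.range_subset_range.2 h)

lemma binSum_congr {X Y : ℕ → ℕ} {t : ℕ} (h : ∀ s < t, X s = Y s) : binSum X t = binSum Y t :=
  Finset.sum_congr rfl fun s hs => h s (Finset.mem_range.1 hs)

lemma le_binSum {X : ℕ → ℕ} (hX : IsInfConf X) (t : ℕ) : t ≤ binSum X t := by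
  induction t with
  | zero => simp
  | succ t ih => have := hX t; rw [binSum_succ]; omega

lemma binSum_proj (l : ℕ) (X : ℕ → ℕ) (t : ℕ) : binSum (proj l X) t = min l (binSum X t) := by
  induction t with
  | zero => simp [binSum_zero]
  | succ t ih => rw [binSum_succ, binSum_succ, ih]; simp only [proj]; omega

lemma exists_bin {X : ℕ → ℕ} (hX : IsInfConf X) {k : ℕ} (hk : 1 ≤ k) :
    ∃ b, binSum X b < k ∧ k ≤ binSum X (b + 1) := by
  have h : ∃ b, k ≤ binSum X (b + 1) := ⟨k, (Nat.le_succ k).trans (le_binSum hX _)⟩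
  classical
  refine ⟨Nat.find h, ?_, Nat.find_spec h⟩
  rcases hb : Nat.find h with _ | b
  · rw [binSum_zero]; exact hk
  · have := Nat.find_min h (m := b) (by omega)
    omega

lemma sSup_support_eq {X : ℕ → ℕ} {p : ℕ} (hp : 0 < X p) (h : ∀ t, p < t → X t = 0) :
    sSup {b : ℕ | 0 < X b} = p := by
  apply IsGreatest.csSup_eq
  refine ⟨hp, fun t (ht : 0 < X t) => ?_⟩
  by_contra hlt
  have := h t (by omega)
  omega

lemma removeLeft_proj {Y : ℕ → ℕ} (hY : IsInfConf Y) (l : ℕ) :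
    removeLeft (proj (l + 1) Y) = proj l Y := by
  obtain ⟨p, h1, h2⟩ := exists_bin hY (k := l + 1) (by omega)
  rw [binSum_succ] at h2
  have hs : sSup {b : ℕ | 0 < proj (l + 1) Y b} = p := by
    apply sSup_support_eq
    · have := hY p
      simp only [proj]; omega
    · intro t ht
      have := binSum_mono Y (show p + 1 ≤ t from ht)
      rw [binSum_succ] at this
      simp only [proj]; omega
  funext t
  simp only [removeLeft, hs]
  simp only [proj]
  rcases lt_trichotomy t p with h | h | h
  · have := binSum_mono Y (show t + 1 ≤ p from h)
    rw [binSum_succ] at this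
    rw [if_neg (by omega)]; omega
  · subst h
    rw [if_pos rfl]; omega
  · have := binSum_mono Y (show p + 1 ≤ t from h)
    rw [binSum_succ] at this
    rw [if_neg (by omega)]; omega

lemma binSum_shift (X : ℕ → ℕ) (t : ℕ) :
    binSum (fun t => if t = 0 then 1 else X (t - 1)) (t + 1) = 1 + binSum X t := by
  simp [binSum, Finset.sum_range_succ']
  omega

lemma binSum_add_one (X : ℕ → ℕ) (a t : ℕ) :
    binSum (fun t => if t = a then X t + 1 else X t) t =
      binSum X t + if a < t then 1 else 0 := by
  induction t with
  | zero => simp [binSum_zero]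
  | succ t ih => rw [binSum_succ, binSum_succ, ih]; split_ifs <;> omega

lemma move_of_le {k : ℕ} {X : ℕ → ℕ} (h : k ≤ X 0) :
    move k X = fun t => if t = 0 then 1 else X (t - 1) := by
  simp [move, h]

lemma move_of_bin {k a : ℕ} {X : ℕ → ℕ} (h1 : binSum X (a + 1) < k)
    (h2 : k ≤ binSum X (a + 2)) :
    move k X = fun t => if t = a then X t + 1 else X t := by
  have h0 : X 0 < k := by
    have := binSum_mono X (show 1 ≤ a + 1 by omega)
    have h := binSum_succ X 0
    rw [binSum_zero, zero_add, zero_add] at h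
    omega
  simp only [move]
  rw [if_neg (by omega), sInf_bin_eq h1 h2]
  rfl

/-- Either the `k`-th ball is in bin `0`, or it is in some bin `a + 1`. -/
lemma bin_cases {X : ℕ → ℕ} (hX : IsInfConf X) {k : ℕ} (hk : 1 ≤ k) :
    k ≤ X 0 ∨ ∃ a, binSum X (a + 1) < k ∧ k ≤ binSum X (a + 2) := by
  obtain ⟨b, h1, h2⟩ := exists_bin hX hk
  rcases b with _ | a
  · left
    rw [binSum_succ, binSum_zero] at h2
    omega
  · exact Or.inr ⟨a, h1, h2⟩

lemma move_inf {X : ℕ → ℕ} (hX : IsInfConf X) {k : ℕ} (hk : 1 ≤ k) : IsInfConf (move k X) := by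
  intro t
  rcases bin_cases hX hk with h | ⟨a, h1, h2⟩
  · rw [move_of_le h]
    have := hX (t - 1)
    dsimp only; split_ifs <;> omega
  · rw [move_of_bin h1 h2]
    have := hX t
    dsimp only; split_ifs <;> omega

/-- Before the deletion, `φ_k` on the `l` rightmost balls sees exactly the `l + 1` rightmost balls
of the image of the infinite configuration. -/
lemma move_proj {X : ℕ → ℕ} (hX : IsInfConf X) {k l : ℕ} (hk : 1 ≤ k) (hkl : k ≤ l) :
    move k (proj l X) = proj (l + 1) (move k X) := by
  rcases bin_cases hX hk with h | ⟨a, h1, h2⟩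
  · rw [move_of_le h, move_of_le (by simp only [proj, binSum_zero]; omega)]
    funext t
    rcases t with _ | t
    · simp [proj, binSum_zero]
    · simp only [proj, binSum_shift]
      simp only [Nat.add_eq_zero_iff, one_ne_zero, and_false, if_false, Nat.add_sub_cancel]
      omega
  · rw [move_of_bin h1 h2, move_of_bin (a := a) (by rw [binSum_proj]; omega)
      (by rw [binSum_proj]; omega)]
    funext t
    simp only [proj, binSum_add_one]
    rcases lt_trichotomy t a with h | h | h
    · have := binSum_mono X (show t + 1 ≤ a + 1 by omega)
      rw [binSum_succ] at this
      rw [if_neg (by omega), if_neg (by omega), if_neg (by omega)]; omega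
    · subst h
      rw [binSum_succ] at h1
      simp only [if_true, lt_irrefl, if_false]; omega
    · rw [if_neg (by omega), if_neg (by omega), if_pos (by omega)]; omega

/-- Moves commute with the projection onto the `l` rightmost balls. -/
lemma moveFin_proj {X : ℕ → ℕ} (hX : IsInfConf X) {k l : ℕ} (hk : 1 ≤ k) (hkl : k ≤ l) :
    moveFin k (proj l X) = proj l (move k X) := by
  rw [moveFin, move_proj hX hk hkl, removeLeft_proj (move_inf hX hk)]

lemma moveFin_iter_proj {k l : ℕ} (hk : 1 ≤ k) (hkl : k ≤ l) (m : ℕ) :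
    ∀ {X : ℕ → ℕ}, IsInfConf X →
      (moveFin k)^[m] (proj l X) = proj l ((move k)^[m] X) := by
  induction m with
  | zero => intro X _; rfl
  | succ m ih =>
    intro X hX
    rw [Function.iterate_succ_apply, Function.iterate_succ_apply, moveFin_proj hX hk hkl,
      ih (move_inf hX hk)]

/-! ### Configurations with bins of size `k` -/

/-- The configuration with `c` balls in bin `0`, then `q` bins of `k` balls, and the
configuration `E` to the left of them. -/
def blockConf (k : ℕ) (E : ℕ → ℕ) (c q : ℕ) : ℕ → ℕ :=
  fun t => if t = 0 then c else if t ≤ q then k else E (t - q - 1)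

lemma blockConf_inf {k c q : ℕ} {E : ℕ → ℕ} (hk : 1 ≤ k) (hE : IsInfConf E) (hc : 1 ≤ c) :
    IsInfConf (blockConf k E c q) := by
  intro t
  have := hE (t - q - 1)
  simp only [blockConf]; split_ifs <;> omega

lemma binSum_blockConf (k : ℕ) (E : ℕ → ℕ) (c q : ℕ) {t : ℕ} (ht : t ≤ q) :
    binSum (blockConf k E c q) (t + 1) = c + t * k := by
  induction t with
  | zero => simp [binSum, blockConf]
  | succ t ih =>
    rw [binSum_succ, ih (by omega)]
    simp only [blockConf]
    rw [if_neg (by omega), if_pos ht]; ring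

lemma move_blockConf_lt {k c q : ℕ} {E : ℕ → ℕ} (hE : k ≤ E 0) (hc : c < k) :
    move k (blockConf k E c q) = blockConf k E (c + 1) q := by
  have h1 : binSum (blockConf k E c q) 1 = c := by simp [binSum, blockConf]
  have h2 : k ≤ blockConf k E c q 1 := by
    simp only [blockConf]
    rw [if_neg (by omega), show 1 - q - 1 = 0 by omega]
    split_ifs
    · exact le_rfl
    · exact hE
  rw [move_of_bin (a := 0) (by rw [zero_add, h1]; exact hc)
    (by rw [zero_add, binSum_succ, h1]; omega)]
  funext t
  rcases t with _ | t <;> simp [blockConf]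

lemma move_blockConf_eq {k q : ℕ} {E : ℕ → ℕ} :
    move k (blockConf k E k q) = blockConf k E 1 (q + 1) := by
  rw [move_of_le (by simp [blockConf])]
  funext t
  rcases t with _ | _ | t
  · simp [blockConf]
  · simp [blockConf]
  · simp only [blockConf]
    simp only [Nat.add_eq_zero_iff, one_ne_zero, and_false, if_false, Nat.add_sub_cancel,
      Nat.add_le_add_iff_right]
    rw [show t + 1 + 1 - (q + 1) - 1 = t + 1 - q - 1 by omega]

/-- Repeating `φ_k` fills bins of size `k` one after the other. -/
lemma move_iter_blockConf {k : ℕ} {E : ℕ → ℕ} (hE : k ≤ E 0) (m : ℕ) :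
    ∀ {c q c' q' : ℕ}, 1 ≤ c → c ≤ k → 1 ≤ c' → c' ≤ k → q' * k + c' = q * k + c + m →
      (move k)^[m] (blockConf k E c q) = blockConf k E c' q' := by
  induction m with
  | zero =>
    intro c q c' q' h1 h2 h3 h4 h
    have : q = q' := by
      rcases lt_trichotomy q q' with hq | hq | hq
      · have := Nat.mul_le_mul_right k (show q + 1 ≤ q' from hq)
        rw [add_mul] at this; omega
      · exact hq
      · have := Nat.mul_le_mul_right k (show q' + 1 ≤ q from hq)
        rw [add_mul] at this; omega
    subst this
    obtain rfl : c' = c := by omega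
    rfl
  | succ m ih =>
    intro c q c' q' h1 h2 h3 h4 h
    rw [Function.iterate_succ_apply]
    rcases h2.lt_or_eq with hlt | rfl
    · rw [move_blockConf_lt hE hlt]
      exact ih (by omega) (by omega) h3 h4 (by omega)
    · rw [move_blockConf_eq]
      exact ih le_rfl h1 h3 h4 (by rw [h]; ring)

lemma ofList_block_eq_proj {k c q i l : ℕ} {E : ℕ → ℕ} (hi : i ≤ E 0) (hl : q * k + c + i = l) :
    ofList (i :: (List.replicate q k ++ [c])) = proj l (blockConf k E c q) := by
  funext t
  have hL : (i :: (List.replicate q k ++ [c])).reverse = c :: (List.replicate q k ++ [i]) := by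
    simp
  simp only [ofList, hL, proj]
  rcases t with _ | t
  · simp [blockConf, binSum_zero]; omega
  · rw [List.getD_cons_succ]
    rcases lt_trichotomy t q with h | h | h
    · rw [binSum_blockConf _ _ _ _ h.le, List.getD_append _ _ _ _ (by simpa using h)]
      have h2 := Nat.mul_le_mul_right k (show t + 1 ≤ q from h)
      rw [add_mul] at h2
      simp only [blockConf]
      rw [if_neg (by omega), if_pos (by omega), List.getD_replicate _ h]
      omega
    · subst h
      rw [binSum_blockConf _ _ _ _ le_rfl, List.getD_append_right _ _ _ _ (by simp)]
      simp [blockConf]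
      omega
    · have h1 := binSum_mono (blockConf k E c q) (show q + 1 + 1 ≤ t + 1 by omega)
      rw [binSum_succ, binSum_blockConf _ _ _ _ le_rfl] at h1
      have h2 : blockConf k E c q (q + 1) = E 0 := by simp [blockConf]
      rw [List.getD_eq_default _ _ (by simp; omega)]
      omega

lemma ofList_zero_cons (L : List ℕ) : ofList (0 :: L) = ofList L := by
  funext t
  simp only [ofList, List.reverse_cons]
  rcases lt_trichotomy t L.length with h | h | h
  · rw [List.getD_append _ _ _ _ (by simpa using h)]
  · rw [List.getD_append_right _ _ _ _ (by simp [h]), List.getD_eq_default L.reverse _ (by simp [h])]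
    simp [h]
  · rw [List.getD_eq_default _ _ (by simp; omega), List.getD_eq_default _ _ (by simp; omega)]

/-- `X_i` is the projection of a block configuration with `l - i` balls in bin `0` and the
bins of size `k`; the bins further left matter only through having at least `i` balls. -/
lemma distConf_eq_proj {k l d r i : ℕ} (hd : 1 ≤ d) (hr : 1 ≤ r) (hrk : r ≤ k)
    (hl : l = k * d + r) (hi : i < k) :
    ∃ c q, 1 ≤ c ∧ c ≤ k ∧ q * k + c + i = l ∧
      ∀ E : ℕ → ℕ, i ≤ E 0 → distConf k d r i = proj l (blockConf k E c q) := by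
  rcases lt_or_ge i r with h | h
  · have e : d * k + (r - i) + i = l := by rw [hl, mul_comm]; omega
    refine ⟨r - i, d, by omega, by omega, e, fun E hE => ?_⟩
    rw [← ofList_block_eq_proj hE e]
    rcases Nat.eq_zero_or_pos i with rfl | h0
    · simp [distConf, ofList_zero_cons]
    · simp only [distConf]
      rw [if_neg (by omega), if_pos h]
  · obtain ⟨e, rfl⟩ : ∃ e, d = e + 1 := ⟨d - 1, by omega⟩
    have e' : e * k + (k + r - i) + i = l := by
      rw [hl, mul_add, mul_comm]; omega
    refine ⟨k + r - i, e, by omega, by omega, e', fun E hE => ?_⟩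
    rw [← ofList_block_eq_proj hE e']
    simp only [distConf]
    rw [if_neg (by omega), if_neg (by omega)]
    rfl

/-! ### The move `φ_l` -/

/-- `φ_l` moves one ball from the leftmost nonempty bin to its right neighbour. -/
lemma moveFin_total {X : ℕ → ℕ} {l p : ℕ} (hp : 0 < X (p + 1)) (h0 : ∀ t, p + 1 < t → X t = 0)
    (hl : binSum X (p + 2) = l) :
    moveFin l X = fun t => if t = p + 1 then X t - 1 else if t = p then X t + 1 else X t := by
  have h1 : binSum X (p + 2) = _ := binSum_succ X (p + 1)
  have hm := move_of_bin (X := X) (k := l) (a := p) (by omega) hl.ge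
  rw [moveFin, hm]
  have hs : sSup {b : ℕ | 0 < (fun t => if t = p then X t + 1 else X t) b} = p + 1 := by
    apply sSup_support_eq
    · simpa using hp
    · intro t ht
      have := h0 t ht
      rw [if_neg (by omega), this]
  funext t
  simp only [removeLeft]
  rw [hs]
  split_ifs <;> omega

/-- The configuration whose bins `0, …, m - 1` are those of `π_l Z`, the remaining balls being
distributed as `y` in bin `m + 1` and the others in bin `m`. -/
def collapseConf (l : ℕ) (Z : ℕ → ℕ) (m y : ℕ) : ℕ → ℕ :=
  fun t => if t < m then proj l Z t else if t = m then l - binSum Z m - y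
    else if t = m + 1 then y else 0

lemma binSum_collapseConf {l m y : ℕ} {Z : ℕ → ℕ} (hy : y ≤ l - binSum Z m) (hy0 : 1 ≤ y) :
    binSum (collapseConf l Z m y) (m + 2) = l := by
  have h : binSum (collapseConf l Z m y) m = binSum (proj l Z) m :=
    binSum_congr fun s hs => by simp [collapseConf, hs]
  rw [binSum_succ, binSum_succ, h, binSum_proj]
  simp [collapseConf]
  omega

lemma moveFin_collapseConf {l m y : ℕ} {Z : ℕ → ℕ} (hy : y + 1 ≤ l - binSum Z m) :
    moveFin l (collapseConf l Z m (y + 1)) = collapseConf l Z m y := by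
  rw [moveFin_total (p := m) (by simp [collapseConf]) (fun t ht => by
    simp only [collapseConf]
    rw [if_neg (by omega), if_neg (by omega), if_neg (by omega)])
    (binSum_collapseConf hy (by omega))]
  funext t
  simp only [collapseConf]
  split_ifs <;> omega

lemma moveFin_iter_collapseConf {l m j : ℕ} {Z : ℕ → ℕ} (y : ℕ) (hy : j + y ≤ l - binSum Z m) :
    (moveFin l)^[y] (collapseConf l Z m (j + y)) = collapseConf l Z m j := by
  induction y with
  | zero => rfl
  | succ y ih =>
    rw [Function.iterate_succ_apply, ← add_assoc, moveFin_collapseConf (by omega), ih (by omega)]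

lemma collapseConf_zero (l m : ℕ) (Z : ℕ → ℕ) :
    collapseConf l Z (m + 1) 0 = collapseConf l Z m (l - binSum Z (m + 1)) := by
  funext t
  simp only [collapseConf, proj]
  rw [binSum_succ]
  rcases lt_trichotomy t m with h | h | h
  · rw [if_pos (by omega), if_pos h]
  · subst h
    simp only [lt_irrefl, lt_add_iff_pos_right, zero_lt_one, if_true, if_false]; omega
  · split_ifs <;> omega

/-- Collapsing all bins into bin `1`: emptying bin `m + 1` takes as many moves as there are
balls in it, i.e. `l - binSum Z (m + 1)` moves. -/
lemma moveFin_collapse (l : ℕ) (Z : ℕ → ℕ) (M : ℕ) :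
    (moveFin l)^[∑ m ∈ Finset.range M, (l - binSum Z (m + 2))] (collapseConf l Z (M + 1) 0)
      = collapseConf l Z 1 0 := by
  induction M with
  | zero => rfl
  | succ M ih =>
    rw [Finset.sum_range_succ, Function.iterate_add_apply, collapseConf_zero]
    have h := moveFin_iter_collapseConf (l := l) (m := M + 1) (j := 0) (Z := Z)
      (l - binSum Z (M + 1 + 1)) (by
        have := binSum_mono Z (show M + 1 ≤ M + 1 + 1 by omega)
        omega)
    rw [zero_add] at h
    rw [h, ih]

lemma proj_eq_collapseConf {l m : ℕ} {Z : ℕ → ℕ} (h : l ≤ binSum Z (m + 1)) :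
    proj l Z = collapseConf l Z m 0 := by
  funext t
  simp only [collapseConf]
  rcases lt_trichotomy t m with ht | ht | ht
  · rw [if_pos ht]
  · subst ht
    rw [binSum_succ] at h
    simp only [proj, lt_irrefl, if_true, if_false]; omega
  · have := binSum_mono Z (show m + 1 ≤ t from ht)
    rw [if_neg (by omega), if_neg (by omega)]
    simp only [proj, ite_self]; omega

lemma sum_arith (k c y e : ℕ) :
    2 * (∑ m ∈ Finset.range e, (c + k * e + y - (c + (m + 1) * k))) + k * e
      = 2 * e * y + k * e * e := by
  induction e with
  | zero => simp
  | succ e ih =>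
    rw [Finset.sum_range_succ']
    have h : ∀ m ∈ Finset.range e, c + k * (e + 1) + y - (c + (m + 1 + 1) * k)
        = c + k * e + y - (c + (m + 1) * k) := by
      intro m _
      have : (m + 1 + 1) * k = (m + 1) * k + k := by ring
      rw [this, mul_add]; omega
    rw [Finset.sum_congr rfl h]
    have h2 : c + k * (e + 1) + y - (c + (0 + 1) * k) = k * e + y := by
      rw [mul_add]; omega
    rw [h2]
    linarith

/-- The number of applications of `φ_l` in `Ψ` stops the collapse when exactly
`d i + (r + i - k)₊` balls are left in bin `1`. -/
lemma count_collapse {k d r i : ℕ} (hd : 1 ≤ d) (hi : i < k) :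
    (∑ m ∈ Finset.range d, (k * d + r - (k - i + (m + 1) * k))) + (k * d + r - (k - i))
      = d * r + k * (d * (d - 1)) / 2 + (d * i + (r + i - k)) := by
  obtain ⟨e, rfl⟩ : ∃ e, d = e + 1 := ⟨d - 1, by omega⟩
  obtain ⟨c, rfl⟩ : ∃ c, k = i + c := ⟨k - i, by omega⟩
  have hc : i + c - i = c := by omega
  have h0 : (i + c) * (e + 1) + r = c + (i + c) * e + (r + i) := by ring
  have hs := sum_arith (i + c) c (r + i) e
  rw [Finset.sum_range_succ, hc, h0]
  have hdiv : 2 * ((i + c) * ((e + 1) * (e + 1 - 1)) / 2) = (i + c) * ((e + 1) * e) := by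
    rw [Nat.add_sub_cancel]
    apply Nat.mul_div_cancel'
    apply Dvd.dvd.mul_left
    rw [mul_comm]
    exact (Nat.even_mul_succ_self e).two_dvd
  have h3 : c + (i + c) * e + (r + i) - (c + (e + 1) * (i + c)) = r + i - (i + c) := by
    rw [show c + (e + 1) * (i + c) = c + (i + c) * e + (i + c) by ring]; omega
  have h4 : c + (i + c) * e + (r + i) - c = (i + c) * e + (r + i) := by omega
  rw [h3, h4]
  linarith

/-- Lemma 2. For `2 ≤ k < l`, `l = kd + r`, the algorithm
`Ψ = φ_k^{l-k} ∘ φ_l^{dr + k·d(d-1)/2} ∘ φ_k^{k-r}` satisfies `Ψ(X_i) = X_{f(i)}`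
for every `0 ≤ i ≤ k-1`. -/
theorem Psi_distConf (k l d r : ℕ) (hk : 2 ≤ k) (hkl : k < l) (hd : 1 ≤ d)
    (hr : 1 ≤ r) (hrk : r ≤ k) (hl : l = k * d + r) :
    ∀ i : ℕ, i ≤ k - 1 →
      Psi k l d r (distConf k d r i) = distConf k d r (fMap k l d r i) := by
  intro i hi
  replace hi : i < k := by omega
  set j := d * i + (r + i - k) with hj
  have hdk : d * k = k * d := mul_comm _ _
  have hjl : j + (k - i) ≤ l := by
    have h1 : d * i + d * (k - i) = k * d := by rw [← mul_add, ← hdk]; congr 1; omega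
    have h2 : 1 * (k - i) ≤ d * (k - i) := Nat.mul_le_mul_right _ hd
    omega
  have hf : fMap k l d r i = j - (l - k) := by
    simp only [fMap]
    split_ifs with h
    · omega
    · obtain ⟨c, rfl⟩ : ∃ c, k = i + c := ⟨k - i, by omega⟩
      rw [show i + c - i = c by omega]
      have h1 : (d + 1) * c = d * c + c := by ring
      have h2 : (i + c) * d = d * i + d * c := by ring
      omega
  -- On `l - i` balls in blocks of `k`, the first `k - r` moves lead to `(d + 1) k - i` balls.
  have phase1 : (moveFin k)^[k - r] (distConf k d r i)
      = proj l (blockConf k (fun _ => k) (k - i) d) := by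
    obtain ⟨c, q, h1, h2, h3, h4⟩ := distConf_eq_proj hd hr hrk hl hi
    rw [h4 (fun _ => k) hi.le, moveFin_iter_proj (by omega) hkl.le _
      (blockConf_inf (by omega) (fun _ => by omega) h1),
      move_iter_blockConf (E := fun _ => k) le_rfl _ h1 h2 (show 1 ≤ k - i by omega) (by omega)
        (show d * k + (k - i) = _ by omega)]
  set Z := blockConf k (fun _ => k) (k - i) d with hZ
  have hbZ : ∀ m ≤ d, binSum Z (m + 1) = (k - i) + m * k := fun m hm =>
    binSum_blockConf _ _ _ _ hm
  have hZ1 : binSum Z 1 = k - i := by simpa using hbZ 0 (by omega)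
  have phase2 : (moveFin l)^[d * r + k * (d * (d - 1)) / 2] (proj l Z)
      = collapseConf l Z 0 j := by
    have hcount := count_collapse (r := r) hd hi
    rw [← hl, ← hj] at hcount
    have hsum : ∑ m ∈ Finset.range d, (l - binSum Z (m + 2))
        = ∑ m ∈ Finset.range d, (l - (k - i + (m + 1) * k)) :=
      Finset.sum_congr rfl fun m hm => by
        rw [hbZ (m + 1) (by have := Finset.mem_range.1 hm; omega)]
    have hN : d * r + k * (d * (d - 1)) / 2
        = (l - (k - i) - j) + ∑ m ∈ Finset.range d, (l - binSum Z (m + 2)) := by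
      rw [hsum]; omega
    have hstart : l ≤ binSum Z (d + 1 + 1) := by
      rw [binSum_succ, hbZ d le_rfl]
      have : Z (d + 1) = k := by simp [hZ, blockConf]
      omega
    rw [hN, Function.iterate_add_apply, proj_eq_collapseConf hstart, moveFin_collapse,
      collapseConf_zero, zero_add, hZ1]
    have h := moveFin_iter_collapseConf (l := l) (m := 0) (j := j) (Z := Z) (l - (k - i) - j)
      (by rw [binSum_zero]; omega)
    rwa [show j + (l - (k - i) - j) = l - (k - i) by omega] at h
  -- The collapse stops at `[j, l - j]`; it is the projection of any `E` whose
  -- two rightmost bins hold `l - j` and `l` balls.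
  have hY : ∀ E : ℕ → ℕ, E 0 = l - j → E 1 = l → collapseConf l Z 0 j = proj l E := by
    intro E h0 h1
    funext t
    have hb1 : binSum E 1 = l - j := by simp [binSum, h0]
    rcases t with _ | _ | t
    · simp [collapseConf, proj, binSum_zero, h0]
    · simp only [collapseConf, proj, zero_add, hb1, h1]
      simp; omega
    · have h2 := binSum_mono E (show 1 + 1 ≤ t + 1 + 1 by omega)
      rw [binSum_succ, hb1, h1] at h2
      simp [collapseConf, proj]; omega
  rw [Psi, phase1, phase2, hf]
  rcases le_or_gt k (l - j) with hc | hc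
  -- Bin `0` already holds `k` balls: the first `φ_k` opens a new bin, and the last `l` balls
  -- end up as `[k, k, …, k, r] = X_0`.
  · rw [show j - (l - k) = 0 by omega]
    set E : ℕ → ℕ := fun t => if t = 0 then l - j else l with hE
    have hEi : IsInfConf E := fun t => by simp only [hE]; split_ifs <;> omega
    have hE0 : E 0 = l - j := by simp [hE]
    obtain ⟨e, rfl⟩ : ∃ e, d = e + 1 := ⟨d - 1, by omega⟩
    have hke : k * (e + 1) = e * k + k := by ring
    have hm : move k E = blockConf k E 1 0 := by
      rw [move_of_le (by omega)]
      funext t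
      rcases t with _ | t <;> simp [blockConf]
    rw [hY E hE0 (by simp [hE]), moveFin_iter_proj (by omega) hkl.le _ hEi,
      show l - k = (l - k - 1) + 1 by omega, Function.iterate_succ_apply, hm,
      move_iter_blockConf (by omega) _ le_rfl (by omega) hr hrk
        (show e * k + r = _ by omega),
      ← ofList_block_eq_proj (i := k) (by omega) (by omega)]
    rfl
  -- Bin `0` holds fewer than `k` balls and is filled up first; `l - k` of the `j` balls are lost.
  · obtain ⟨c, q, h1, h2, h3, h4⟩ := distConf_eq_proj (i := j - (l - k)) hd hr hrk hl (by omega)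
    have hE : IsInfConf (fun _ => l) := fun _ => show 0 < l by omega
    rw [hY (blockConf k (fun _ => l) (l - j) 0) (by simp [blockConf]) (by simp [blockConf]),
      moveFin_iter_proj (by omega) hkl.le _ (blockConf_inf (by omega) hE (by omega)),
      move_iter_blockConf (E := fun _ => l) hkl.le _ (by omega) hc.le h1 h2
        (show q * k + c = 0 * k + (l - j) + (l - k) by rw [zero_mul]; omega),
      ← h4 (fun _ => l) (show j - (l - k) ≤ l by omega)]
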